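/- arXiv:1507.06077 — 2 statements merged into one kernel-verified Lean document; each statement's English description precedes it below -/
import Mathlib

section
/- Let $J$ be an infinite set and $\lambda,\chi\in\mathbb{R}^J$ satisfy the positive energy condition for $W(A_J)$: the infimum over finitely supported permutations $w$ of $J$ of $\sum_{j}\lambda_j(d_{w(j)}-d_j)$ is finite. If $m<n$ are real numbers and $J_m=\{j:\lambda_j=m\}$, $J_n=\{j:\lambda_j=n\}$ are both nonempty, then $\{d_j: j\in J_m\}$ is bounded below and $\{d_j:j\in J_n\}$ is bounded above. -/
/-! Exchanging a coordinate `a` with `λ_a = m` and a coordinate `b` with `λ_b = n` changes the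
energy by `(n - m) (d_a - d_b)` (`energyA_swap`). The positive energy condition bounds this below
uniformly in `a` and `b`, so `d_a - d_b` is bounded below because `n - m > 0`. Fixing `b` bounds `d`
below on the level set of `m`, and fixing `a` bounds it above on the level set of `n`. -/

open scoped BigOperators

/-- A permutation of `J` is finitely supported if it fixes all but finitely many elements. -/
def IsFinPerm {J : Type*} (w : Equiv.Perm J) : Prop := {j | w j ≠ j}.Finite

/-- A finitely supported sign function: takes values `±1` and equals `1` outside a finite set. -/
def IsSign {J : Type*} (σ : J → ℝ) : Prop :=
  (∀ j, σ j = 1 ∨ σ j = -1) ∧ {j | σ j ≠ 1}.Finite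

/-- A finitely supported sign function whose support has even cardinality. -/
def IsEvenSign {J : Type*} (σ : J → ℝ) : Prop :=
  IsSign σ ∧ ∃ F : Finset J, (∀ j, σ j = -1 ↔ j ∈ F) ∧ Even F.card

/-- The energy `λ(w⁻¹.χ - χ) = ∑ⱼ λⱼ (d_{w(j)} - dⱼ)` (a finite sum for `w` finitely
supported). -/
noncomputable def energyA {J : Type*} (lam d : J → ℝ) (w : Equiv.Perm J) : ℝ :=
  ∑ᶠ j, lam j * (d (w j) - d j)

/-- The energy `λ(σ w⁻¹.χ - χ) = ∑ⱼ λⱼ (σⱼ d_{w(j)} - dⱼ)`. -/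
noncomputable def energyB {J : Type*} (lam d σ : J → ℝ) (w : Equiv.Perm J) : ℝ :=
  ∑ᶠ j, lam j * (σ j * d (w j) - d j)

/-- Positive energy condition for `W(A_J)`. -/
def PECA {J : Type*} (lam d : J → ℝ) : Prop :=
  ∃ C : ℝ, ∀ w : Equiv.Perm J, IsFinPerm w → C ≤ energyA lam d w

/-- Positive energy condition for `W(B_J)`. -/
def PECB {J : Type*} (lam d : J → ℝ) : Prop :=
  ∃ C : ℝ, ∀ (σ : J → ℝ) (w : Equiv.Perm J), IsSign σ → IsFinPerm w → C ≤ energyB lam d σ w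

/-- Positive energy condition for `W(D_J)`. -/
def PECD {J : Type*} (lam d : J → ℝ) : Prop :=
  ∃ C : ℝ, ∀ (σ : J → ℝ) (w : Equiv.Perm J), IsEvenSign σ → IsFinPerm w → C ≤ energyB lam d σ w

theorem isFinPerm_swap {J : Type*} [DecidableEq J] (a b : J) : IsFinPerm (Equiv.swap a b) := by
  refine (Set.toFinite {a, b}).subset fun j hj => ?_
  by_contra h
  simp only [Set.mem_insert_iff, Set.mem_singleton_iff, not_or] at h
  exact hj (Equiv.swap_apply_of_ne_of_ne h.1 h.2)

theorem energyA_swap {J : Type*} [DecidableEq J] (lam d : J → ℝ) {a b : J} (hab : a ≠ b) :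
    energyA lam d (Equiv.swap a b) = (lam b - lam a) * (d a - d b) := by
  unfold energyA
  rw [finsum_eq_sum_of_support_subset (s := {a, b}), Finset.sum_pair hab,
    Equiv.swap_apply_left, Equiv.swap_apply_right]
  · ring
  · intro j hj
    by_contra h
    simp only [Finset.coe_insert, Finset.coe_singleton, Set.mem_insert_iff,
      Set.mem_singleton_iff, not_or] at h
    simp [Equiv.swap_apply_of_ne_of_ne h.1 h.2] at hj

theorem pecA_bddBelow_bddAbove (J : Type*) [Infinite J] (lam d : J → ℝ)
    (hpec : PECA lam d) (m n : ℝ) (hmn : m < n)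
    (h1 : {j | lam j = m}.Nonempty) (h2 : {j | lam j = n}.Nonempty) :
    BddBelow (d '' {j | lam j = m}) ∧ BddAbove (d '' {j | lam j = n}) := by
  classical
  obtain ⟨C, hC⟩ := hpec
  have key : ∀ a b, lam a = m → lam b = n → C / (n - m) ≤ d a - d b := by
    intro a b ha hb
    have hab : a ≠ b := by
      rintro rfl
      exact hmn.ne (ha.symm.trans hb)
    have h := hC _ (isFinPerm_swap a b)
    rw [energyA_swap lam d hab, ha, hb] at h
    rwa [div_le_iff₀' (sub_pos.2 hmn)]
  obtain ⟨a, ha⟩ := h1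
  obtain ⟨b, hb⟩ := h2
  constructor
  · refine ⟨d b + C / (n - m), ?_⟩
    rintro _ ⟨j, hj, rfl⟩
    linarith [key j b hj hb]
  · refine ⟨d a - C / (n - m), ?_⟩
    rintro _ ⟨j, hj, rfl⟩
    linarith [key a j ha hj]
end

section
/- Let $J$ be an infinite set and $\lambda=(\lambda_j),\chi=(d_j)\in\mathbb{R}^J$. If $(J,\lambda,\chi)$ satisfies the positive energy condition for $W(B_J)$, then $(J,-|\lambda|,|\chi|)$ satisfies the positive energy condition for $W(A_J)$, where $|\lambda|=(|\lambda_j|)_j$ and $|\chi|=(|d_j|)_j$. Moreover $\inf_w\sum_j(-|\lambda_j|)(|d_{w(j)}|-|d_j|)\ \ge\ \inf_{\sigma,w}\sum_j\lambda_j(\sigma_jd_{w(j)}-d_j)$. -/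
/-!
For a finitely supported permutation `w`, choose the sign `σ` supported on the support of `w` so
that `λⱼ σⱼ d_{w(j)} = -|λⱼ| |d_{w(j)}|` there. Since `-λⱼ dⱼ ≤ |λⱼ| |dⱼ|`, the `W(B_J)`-energy of
`(σ, w)` is termwise at most the `W(A_J)`-energy of `w` for `(-|λ|, |χ|)`, so every lower bound of
the former family bounds the latter (`exists_sign_energyB_le_energyA`).
-/

open scoped BigOperators

theorem exists_sign_energyB_le_energyA {J : Type*} (lam d : J → ℝ) (w : Equiv.Perm J)
    (hw : IsFinPerm w) :
    ∃ σ : J → ℝ, IsSign σ ∧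
      energyB lam d σ w ≤ energyA (fun j => -|lam j|) (fun j => |d j|) w := by
  classical
  refine ⟨fun j => if w j ≠ j ∧ 0 < lam j * d (w j) then -1 else 1, ⟨fun j => ?_, ?_⟩, ?_⟩
  · dsimp only
    split_ifs <;> simp
  · refine hw.subset fun j hj hfix => hj ?_
    simp [hfix]
  · refine finsum_le_finsum' (hw.subset fun j hj hfix => hj ?_)
      (hw.subset fun j hj hfix => hj ?_) fun j => ?_
    · simp [hfix]
    · simp [hfix]
    · dsimp only
      by_cases hfix : w j = j
      · simp [hfix]
      · have hd : -(lam j * d j) ≤ |lam j| * |d j| := by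
          rw [← abs_mul]
          exact neg_le_abs _
        have hmul : |lam j| * |d (w j)| = |lam j * d (w j)| := (abs_mul _ _).symm
        by_cases hpos : 0 < lam j * d (w j)
        · rw [abs_of_pos hpos] at hmul
          rw [if_pos ⟨hfix, hpos⟩]
          linarith
        · rw [abs_of_nonpos (not_lt.mp hpos)] at hmul
          rw [if_neg fun h => hpos h.2]
          linarith

theorem pecB_implies_pecA_abs (J : Type*) [Infinite J] (lam d : J → ℝ)
    (hpec : PECB lam d) :
    PECA (fun j => -|lam j|) (fun j => |d j|) ∧
    ∀ C : ℝ,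
      (∀ (σ : J → ℝ) (w : Equiv.Perm J), IsSign σ → IsFinPerm w →
        C ≤ energyB lam d σ w) →
      ∀ w : Equiv.Perm J, IsFinPerm w →
        C ≤ energyA (fun j => -|lam j|) (fun j => |d j|) w := by
  have key : ∀ C : ℝ,
      (∀ (σ : J → ℝ) (w : Equiv.Perm J), IsSign σ → IsFinPerm w →
        C ≤ energyB lam d σ w) →
      ∀ w : Equiv.Perm J, IsFinPerm w →
        C ≤ energyA (fun j => -|lam j|) (fun j => |d j|) w := by
    intro C hC w hw
    obtain ⟨σ, hσ, hle⟩ := exists_sign_energyB_le_energyA lam d w hw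
    exact (hC σ w hσ hw).trans hle
  obtain ⟨C, hC⟩ := hpec
  exact ⟨⟨C, key C hC⟩, key⟩
end
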